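/- arXiv:1709.06945 — 3 statements merged into one kernel-verified Lean document; each statement's English description precedes it below -/
import Mathlib

section
/- Let d ≥ 0 and let Γ ⊆ ℕ × ℤ^d be an additive subsemigroup containing (0,0) such that: (1) Γ ∩ ({0} × ℤ^d) = {(0,0)}; (2) there exist finitely many vectors w₁, …, w_r ∈ ℤ^d such that Γ is contained in the subsemigroup of ℕ × ℤ^d generated by (1,w₁), …, (1,w_r); (3) Γ generates ℤ^{1+d} as a group. Let C(Γ) ⊆ ℝ^{1+d} be the closed convex cone generated by Γ and let Δ(Γ) = {x ∈ ℝ^d : (1,x) ∈ C(Γ)}. Then the limit lim_{m→∞} #{v ∈ ℤ^d : (m,v) ∈ Γ} / m^d exists and equals the d-dimensional Lebesgue measure of Δ(Γ). -/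
open Filter MeasureTheory

/-!
Let `S` be a semigroup of lattice points that generates the whole lattice. If `S` is generated by
finitely many vectors, it contains every lattice point of some translate of its cone. Applied to
finitely many well-chosen elements of `S`, this shows that for each compact subset `K` of the
interior of `Δ(S)` the semigroup contains all lattice points of `mK` at height `m`, once `m` is
large; conversely the points of `S` at height `m` lie in `mΔ(S)`. A bounded convex set `K` has
`m ^ d * vol K + o(m ^ d)` lattice points in `mK`, and polytopes inside the interior of `Δ(S)`
exhaust its volume, which pins down the limit. When the cone is not known to be generated at
height `1`, `Δ(S)` may be unbounded; being convex with nonempty interior it then has infinite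
volume, so the limit formula persists in `[0, ∞]`.
-/

open Set Topology Pointwise

section Conductor

variable {G V κ : Type*} [AddCommGroup G] [NormedAddCommGroup V] [NormedSpace ℝ V]
  {φ : G →+ V} {S : AddSubmonoid G}

theorem finite_preimage_parallelepiped [Fintype κ] (hφ : Tendsto φ cofinite (cocompact V))
    (v : κ → V) : (φ ⁻¹' parallelepiped v).Finite :=
  tendsto_cofinite_cocompact_iff.1 hφ _ (isCompact_Icc.image (by fun_prop))

theorem sum_zsmul_mem [Fintype κ] {a : κ → ℤ} (ha : ∀ k, 0 ≤ a k) {v : κ → G} (hv : ∀ k, v k ∈ S) :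
    ∑ k, a k • v k ∈ S := by
  refine S.sum_mem fun k _ => ?_
  lift a k to ℕ using ha k with n
  rw [natCast_zsmul]
  exact S.nsmul_mem (hv k) n

theorem exists_map_sub_mem_parallelepiped [Fintype κ] {v : κ → G} {z : G}
    (hz : φ z ∈ PointedCone.hull ℝ (range (φ ∘ v))) :
    ∃ n : κ → ℤ, (∀ k, 0 ≤ n k) ∧ φ (z - ∑ k, n k • v k) ∈ parallelepiped (φ ∘ v) := by
  obtain ⟨l, hl⟩ := Submodule.mem_span_range_iff_exists_fun _ |>.1 hz
  refine ⟨fun k => ⌊(l k : ℝ)⌋, fun k => Int.floor_nonneg.2 (l k).2, ?_⟩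
  refine mem_parallelepiped_iff _ _ |>.2 ⟨fun k => Int.fract (l k : ℝ),
    ⟨fun k => Int.fract_nonneg _, fun k => (Int.fract_lt_one _).le⟩, ?_⟩
  rw [map_sub, ← hl, map_sum, ← Finset.sum_sub_distrib]
  refine Finset.sum_congr rfl fun k _ => ?_
  simp only [map_zsmul, ← Int.self_sub_floor, sub_smul, Int.cast_smul_eq_zsmul]
  rfl

/- Up to a nonnegative combination of the generators, an element of the translated cone lies in the
finite set of lattice points of the fundamental parallelepiped; the translation only has to
absorb the negative coefficients of these finitely many points. -/
theorem exists_mem_of_map_sub_mem_hull_range [Finite κ]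
    (hφ : Tendsto φ cofinite (cocompact V)) {v : κ → G} (hv : ∀ k, v k ∈ S)
    (hgen : AddSubgroup.closure (range v) = ⊤) :
    ∃ c : G, ∀ z, φ z - φ c ∈ PointedCone.hull ℝ (range (φ ∘ v)) → z ∈ S := by
  cases nonempty_fintype κ
  have hcoeff (p : G) : ∃ a : κ → ℤ, p = ∑ k, a k • v k :=
    AddSubgroup.mem_closure_range_iff_of_fintype.1 (hgen ▸ AddSubgroup.mem_top p)
  choose a ha using hcoeff
  obtain ⟨N, hN⟩ := ((finite_preimage_parallelepiped hφ (φ ∘ v)).image (-a ·)).bddAbove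
  refine ⟨∑ k, N k • v k, fun z hz => ?_⟩
  rw [← map_sub] at hz
  obtain ⟨n, hn, hp⟩ := exists_map_sub_mem_parallelepiped hz
  set p := z - ∑ k, N k • v k - ∑ k, n k • v k with p_def
  have hNp : -a p ≤ N := hN (mem_image_of_mem _ hp)
  have hz_eq : z = ∑ k, (a p k + N k + n k) • v k := by
    simp only [add_smul, Finset.sum_add_distrib, ← ha, p_def]
    abel
  rw [hz_eq]
  refine sum_zsmul_mem (fun k => ?_) hv
  linarith [hNp k, hn k, Pi.neg_apply (a p) k]

end Conductor

section Interior

variable {V : Type*} [NormedAddCommGroup V] [NormedSpace ℝ V] [FiniteDimensional ℝ V]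

theorem exists_finite_subset_convexHull_mem_nhds {s : Set V} {x : V} (hs : s ∈ 𝓝 x) :
    ∃ t ⊆ s, t.Finite ∧ convexHull ℝ t ∈ 𝓝 x := by
  obtain ⟨b, hb, hbs⟩ := exists_mem_interior_convexHull_affineBasis hs
  exact ⟨range b, (subset_convexHull ℝ _).trans hbs, finite_range b,
    mem_interior_iff_mem_nhds.1 hb⟩

theorem exists_finite_subset_subset_convexHull {K U : Set V} (hK : IsCompact K) (hU : IsOpen U)
    (hKU : K ⊆ U) : ∃ t ⊆ U, t.Finite ∧ K ⊆ convexHull ℝ t := by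
  refine hK.induction_on (p := fun K => ∃ t ⊆ U, t.Finite ∧ K ⊆ convexHull ℝ t)
    ⟨∅, by simp⟩ ?_ ?_ ?_
  · rintro K L hKL ⟨t, htU, ht, hLt⟩
    exact ⟨t, htU, ht, hKL.trans hLt⟩
  · rintro K L ⟨t, htU, ht, hKt⟩ ⟨u, huU, hu, hLu⟩
    exact ⟨t ∪ u, union_subset htU huU, ht.union hu,
      union_subset (hKt.trans (convexHull_mono subset_union_left))
        (hLu.trans (convexHull_mono subset_union_right))⟩
  · intro x hx
    obtain ⟨t, htU, ht, htx⟩ := exists_finite_subset_convexHull_mem_nhds (hU.mem_nhds (hKU hx))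
    exact ⟨_, mem_nhdsWithin_of_mem_nhds htx, t, htU, ht, subset_rfl⟩

theorem exists_finite_subset_hull_mem_nhds {s : Set V} {y : V}
    (hy : y ∈ interior (PointedCone.hull ℝ s : Set V)) :
    ∃ t ⊆ s, t.Finite ∧ (PointedCone.hull ℝ t : Set V) ∈ 𝓝 y := by
  obtain ⟨u, hus, hu, huy⟩ :=
    exists_finite_subset_convexHull_mem_nhds (mem_interior_iff_mem_nhds.1 hy)
  choose! T hTs hT using fun x (hx : x ∈ u) => Submodule.mem_span_finite_of_mem_span (hus hx)
  refine ⟨⋃ x ∈ u, T x, iUnion₂_subset hTs, hu.biUnion fun x _ => (T x).finite_toSet, ?_⟩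
  refine mem_of_superset huy (convexHull_min (fun x hx => ?_) (PointedCone.convex _))
  exact Submodule.span_mono (subset_biUnion_of_mem (u := fun x => (T x : Set V)) hx) (hT x hx)

end Interior

theorem exists_finite_subset_closure_eq_top {G : Type*} [AddCommGroup G] [Module.Finite ℤ G]
    {s : Set G} (hs : AddSubgroup.closure s = ⊤) :
    ∃ t ⊆ s, t.Finite ∧ AddSubgroup.closure t = ⊤ := by
  have hspan : Submodule.span ℤ s = ⊤ := by
    rw [← Submodule.toAddSubgroup_inj, Submodule.span_int_eq_addSubgroupClosure, hs]
    rfl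
  obtain ⟨t, hts, ht⟩ := Submodule.fg_span_iff_fg_span_finset_subset s |>.1
    (hspan ▸ Module.Finite.fg_top)
  refine ⟨t, hts, t.finite_toSet, ?_⟩
  rw [← Submodule.span_int_eq_addSubgroupClosure, ← ht,
    Submodule.span_int_eq_addSubgroupClosure, hs]

section Semigroup

variable {G V : Type*} [AddCommGroup G] [Module.Finite ℤ G] [NormedAddCommGroup V]
  [NormedSpace ℝ V] [FiniteDimensional ℝ V] {φ : G →+ V} {S : AddSubmonoid G}

theorem exists_mem_of_map_sub_mem_nhds (hφ : Tendsto φ cofinite (cocompact V))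
    (hS : AddSubgroup.closure (S : Set G) = ⊤) {y : V}
    (hy : y ∈ interior (PointedCone.hull ℝ (φ '' S) : Set V)) :
    ∃ c : G, ∃ P : PointedCone ℝ V, (P : Set V) ∈ 𝓝 y ∧ ∀ z, φ z - φ c ∈ P → z ∈ S := by
  obtain ⟨s, hsS, hs_fin, hsy⟩ :=
    exists_subset_image_finite_and.1 (exists_finite_subset_hull_mem_nhds hy)
  obtain ⟨t, htS, ht_fin, htop⟩ := exists_finite_subset_closure_eq_top hS
  have := (hs_fin.union ht_fin).to_subtype
  obtain ⟨c, hc⟩ := exists_mem_of_map_sub_mem_hull_range hφ (v := ((↑) : ↥(s ∪ t) → G))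
    (fun k => union_subset hsS htS k.2)
    (by
      rw [Subtype.range_coe, eq_top_iff, ← htop]
      exact AddSubgroup.closure_mono subset_union_right)
  rw [range_comp, Subtype.range_coe] at hc
  exact ⟨c, _, mem_of_superset hsy (Submodule.span_mono (image_mono subset_union_left)), hc⟩

theorem eventually_forall_smul_map_mem_imp_mem (hφ : Tendsto φ cofinite (cocompact V))
    (hS : AddSubgroup.closure (S : Set G) = ⊤) {K : Set V} (hK : IsCompact K)
    (hKS : K ⊆ interior (PointedCone.hull ℝ (φ '' S) : Set V)) :
    ∀ᶠ ε in 𝓝[>] (0 : ℝ), ∀ z, ε • φ z ∈ K → z ∈ S := by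
  have hloc : ∀ y ∈ K, ∀ᶠ p : ℝ × V in 𝓝 (0, y), 0 < p.1 → ∀ z, p.1 • φ z = p.2 → z ∈ S := by
    intro y hy
    obtain ⟨c, P, hP, hcP⟩ := exists_mem_of_map_sub_mem_nhds hφ hS (hKS hy)
    have hlim : Tendsto (fun p : ℝ × V => p.2 - p.1 • φ c) (𝓝 (0, y)) (𝓝 y) := by
      have : Continuous fun p : ℝ × V => p.2 - p.1 • φ c := by fun_prop
      simpa only [zero_smul, sub_zero] using this.tendsto (0, y)
    filter_upwards [hlim hP] with p hp hε z hz
    rw [mem_preimage, ← hz, ← smul_sub, SetLike.mem_coe] at hp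
    exact hcP z ((P.smul_mem_iff hε).1 hp)
  have hK' := hK.eventually_forall_of_forall_eventually
    (P := fun ε y => 0 < ε → ∀ z, ε • φ z = y → z ∈ S) hloc
  filter_upwards [nhdsWithin_le_nhds hK', self_mem_nhdsWithin] with ε hε hpos z hz
  exact hε _ hz hpos z rfl

end Semigroup

section PointedCone

variable {α G V : Type*} [AddCommGroup G] [AddCommGroup V] [Module ℝ V]

theorem smul_mem_convexHull_rays {f : α → V} {T : Set α} {a : ℝ} (ha : 0 ≤ a) {y : V}
    (hy : y ∈ convexHull ℝ {y | ∃ c : ℝ, 0 ≤ c ∧ ∃ g ∈ T, y = c • f g}) :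
    a • y ∈ convexHull ℝ {y | ∃ c : ℝ, 0 ≤ c ∧ ∃ g ∈ T, y = c • f g} := by
  have hay := smul_mem_smul_set (a := a) hy
  rw [← convexHull_smul] at hay
  refine convexHull_mono ?_ hay
  rintro _ ⟨_, ⟨c, hc, g, hg, rfl⟩, rfl⟩
  exact ⟨a * c, mul_nonneg ha hc, g, hg, smul_smul _ _ _⟩

theorem convexHull_rays_eq_hull (f : α → V) {T : Set α} (hT : T.Nonempty) :
    convexHull ℝ {y | ∃ c : ℝ, 0 ≤ c ∧ ∃ g ∈ T, y = c • f g} = PointedCone.hull ℝ (f '' T) := by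
  set A := {y | ∃ c : ℝ, 0 ≤ c ∧ ∃ g ∈ T, y = c • f g}
  have hmem {c : ℝ} (hc : 0 ≤ c) {g : α} (hg : g ∈ T) : c • f g ∈ convexHull ℝ A :=
    subset_convexHull ℝ A ⟨c, hc, g, hg, rfl⟩
  apply Subset.antisymm
  · refine convexHull_min ?_ (PointedCone.convex _)
    rintro _ ⟨c, hc, g, hg, rfl⟩
    exact PointedCone.smul_mem _ hc (Submodule.subset_span (mem_image_of_mem f hg))
  · intro y hy
    induction hy using Submodule.span_induction with
    | mem y hy =>
      obtain ⟨g, hg, rfl⟩ := hy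
      simpa only [one_smul] using hmem zero_le_one hg
    | zero =>
      obtain ⟨g, hg⟩ := hT
      simpa only [zero_smul] using hmem le_rfl hg
    | add x y _ _ hx hy =>
      have := (convex_convexHull ℝ A).midpoint_mem hx hy
      have := smul_mem_convexHull_rays zero_le_two this
      rwa [midpoint_eq_smul_add, smul_smul, mul_invOf_self, one_smul] at this
    | smul c x _ hx => exact smul_mem_convexHull_rays c.2 hx

theorem span_range_le_span_image {s : Set G} (φ : G →+ V) (hs : AddSubgroup.closure s = ⊤) :
    Submodule.span ℝ (range φ) ≤ Submodule.span ℝ (φ '' s) := by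
  have hle : AddSubgroup.closure s ≤ (Submodule.span ℝ (φ '' s)).toAddSubgroup.comap φ :=
    (AddSubgroup.closure_le _).2 fun z hz => Submodule.subset_span (mem_image_of_mem φ hz)
  rw [hs] at hle
  refine Submodule.span_le.2 ?_
  rintro _ ⟨z, rfl⟩
  exact hle (AddSubgroup.mem_top z)

end PointedCone

section PointedConeTopology

variable {V : Type*} [AddCommGroup V] [Module ℝ V] [TopologicalSpace V] [ContinuousConstSMul ℝ V]

theorem smul_mem_interior {P : PointedCone ℝ V} {a : ℝ} (ha : 0 < a) {y : V}
    (hy : y ∈ interior (P : Set V)) : a • y ∈ interior (P : Set V) := by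
  have hP : a • (P : Set V) = P := by
    ext z
    rw [mem_smul_set_iff_inv_smul_mem₀ ha.ne']
    exact P.smul_mem_iff (inv_pos.2 ha)
  rw [← hP, interior_smul₀ ha.ne']
  exact smul_mem_smul_set hy

end PointedConeTopology

section NormedPointedCone

variable {V : Type*} [NormedAddCommGroup V] [NormedSpace ℝ V]

theorem slice_closure_subset_closure_slice_interior {P : PointedCone ℝ (ℝ × V)}
    (hP : (interior (P : Set (ℝ × V))).Nonempty) :
    {x : V | ((1 : ℝ), x) ∈ closure (P : Set (ℝ × V))} ⊆
      closure {x | ((1 : ℝ), x) ∈ interior (P : Set (ℝ × V))} := by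
  intro x hx
  rw [mem_ofPred, ← P.convex.closure_interior_eq_closure_of_nonempty_interior hP] at hx
  have hpos : ∀ᶠ y : ℝ × V in 𝓝 ((1 : ℝ), x), 0 < y.1 :=
    continuous_fst.continuousAt.eventually (lt_mem_nhds one_pos)
  have hlim : Tendsto (fun y : ℝ × V => y.1⁻¹ • y.2) (𝓝 ((1 : ℝ), x)) (𝓝 x) := by
    have : ContinuousAt (fun y : ℝ × V => y.1⁻¹ • y.2) ((1 : ℝ), x) :=
      (continuousAt_fst.inv₀ one_ne_zero).smul continuousAt_snd
    simpa only [inv_one, one_smul] using this.tendsto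
  refine mem_closure_iff_frequently.2 (hlim.frequently ?_)
  refine ((mem_closure_iff_frequently.1 hx).and_eventually hpos).mono ?_
  rintro ⟨t, y⟩ ⟨hty, ht : 0 < t⟩
  have : (t⁻¹ • (t, y) : ℝ × V) = (1, t⁻¹ • y) := by
    rw [Prod.smul_mk, smul_eq_mul, inv_mul_cancel₀ ht.ne']
  exact mem_ofPred.2 (this ▸ smul_mem_interior (inv_pos.2 ht) hty)

theorem interior_hull_nonempty [FiniteDimensional ℝ V] {s : Set V}
    (hs : Submodule.span ℝ s = ⊤) :
    (interior (PointedCone.hull ℝ s : Set V)).Nonempty := by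
  have h0 : (0 : V) ∈ (PointedCone.hull ℝ s : Set V) := zero_mem _
  rw [(PointedCone.convex _).interior_nonempty_iff_affineSpan_eq_top,
    AffineSubspace.affineSpan_eq_top_iff_vectorSpan_eq_top_of_nonempty _ _ _ ⟨0, h0⟩,
    vectorSpan_eq_span_vsub_set_right ℝ h0, eq_top_iff, ← hs]
  refine Submodule.span_mono fun y hy => ⟨y, Submodule.subset_span hy, ?_⟩
  simp only [vsub_eq_sub, sub_zero]

theorem norm_snd_le_of_mem_closure_hull {s : Set (ℝ × V)} {W : ℝ}
    (hs : ∀ y ∈ s, ‖y.2‖ ≤ W * y.1) {y : ℝ × V}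
    (hy : y ∈ closure (PointedCone.hull ℝ s : Set (ℝ × V))) : ‖y.2‖ ≤ W * y.1 := by
  refine closure_minimal (t := {y : ℝ × V | ‖y.2‖ ≤ W * y.1}) (fun y hy => ?_)
    (isClosed_le (by fun_prop) (by fun_prop)) hy
  induction hy using Submodule.span_induction with
  | mem y hy => exact hs y hy
  | zero => simp
  | add x y _ _ hx hy =>
    calc ‖x.2 + y.2‖ ≤ ‖x.2‖ + ‖y.2‖ := norm_add_le _ _
      _ ≤ W * (x.1 + y.1) := by rw [mul_add]; exact add_le_add hx hy
  | smul c y _ hy =>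
    calc ‖(c : ℝ) • y.2‖ = c * ‖y.2‖ := by rw [norm_smul, Real.norm_of_nonneg c.2]
      _ ≤ c * (W * y.1) := mul_le_mul_of_nonneg_left hy c.2
      _ = W * (c * y.1) := mul_left_comm _ _ _

end NormedPointedCone

theorem exists_seq_mem_le_dist_of_not_isBounded {X : Type*} [PseudoMetricSpace X] {s : Set X}
    (hs : ¬ Bornology.IsBounded s) (R : ℝ) :
    ∃ x : ℕ → X, (∀ n, x n ∈ s) ∧ Pairwise fun m n => R ≤ dist (x m) (x n) := by
  have : Std.Symm fun x y : X => R ≤ dist x y := ⟨fun x y h => dist_comm x y ▸ h⟩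
  refine exists_seq_of_forall_finset_exists' (· ∈ s) (fun x y => R ≤ dist x y) fun t _ => ?_
  by_contra! h
  refine hs (((Bornology.isBounded_biUnion t.finite_toSet).2 fun x _ =>
    Metric.isBounded_ball (x := x) (r := R)).subset fun y hy => ?_)
  obtain ⟨x, hx, hxy⟩ := h y hy
  exact mem_biUnion hx (Metric.mem_ball'.2 hxy)

section Convex

variable {V : Type*} [NormedAddCommGroup V] [NormedSpace ℝ V]

theorem ball_midpoint_subset {s : Set V} (hs : Convex ℝ s) {p x : V} {r : ℝ}
    (hp : Metric.ball p r ⊆ s) (hx : x ∈ s) : Metric.ball (midpoint ℝ p x) (r / 2) ⊆ s := by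
  intro z hz
  have hzw : midpoint ℝ ((2 : ℝ) • z - x) x = z := by
    rw [midpoint_eq_smul_add, sub_add_cancel, smul_smul, invOf_mul_self, one_smul]
  have hsub : (2 : ℝ) • z - x - p = (2 : ℝ) • (z - midpoint ℝ p x) := by
    rw [midpoint_eq_smul_add, smul_sub, smul_smul, mul_invOf_self, one_smul]
    abel
  have hw : (2 : ℝ) • z - x ∈ Metric.ball p r := by
    rw [mem_ball_iff_norm] at hz ⊢
    rw [hsub, norm_smul, Real.norm_two]
    linarith
  exact hzw ▸ hs.midpoint_mem (hp hw) hx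

/- If `s` were unbounded, the midpoints of a fixed ball in `s` with widely separated points of `s`
would be infinitely many disjoint balls of the same radius inside `s`. -/
theorem isBounded_of_convex_of_measure_ne_top
    [FiniteDimensional ℝ V] [MeasurableSpace V] [BorelSpace V] (μ : Measure V) [μ.IsAddHaarMeasure]
    {s : Set V} (hs : Convex ℝ s) (hs_int : (interior s).Nonempty) (hμ : μ s ≠ ⊤) :
    Bornology.IsBounded s := by
  by_contra hb
  obtain ⟨p, hp⟩ := hs_int
  obtain ⟨r, hr, hps⟩ := Metric.mem_nhds_iff.1 (mem_interior_iff_mem_nhds.1 hp)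
  obtain ⟨x, hxs, hx⟩ := exists_seq_mem_le_dist_of_not_isBounded hb (2 * r)
  let B (n : ℕ) : Set V := Metric.ball (midpoint ℝ p (x n)) (r / 2)
  have hdisj : Pairwise (Function.onFun Disjoint B) := by
    intro m n hmn
    refine Metric.ball_disjoint_ball ?_
    have hR := hx hmn
    have hmid : midpoint ℝ p (x m) - midpoint ℝ p (x n) = (⅟2 : ℝ) • (x m - x n) := by
      rw [midpoint_eq_smul_add, midpoint_eq_smul_add, ← smul_sub, add_sub_add_left_eq_sub]
    rw [dist_eq_norm, hmid, norm_smul, ← dist_eq_norm, invOf_eq_inv, norm_inv, Real.norm_two]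
    linarith
  refine hμ (measure_mono_top (iUnion_subset fun n => ball_midpoint_subset hs hps (hxs n)) ?_)
  rw [measure_iUnion hdisj fun _ => measurableSet_ball]
  simp only [B, Measure.addHaar_ball_center]
  exact ENNReal.tsum_const_eq_top_of_ne_zero (Metric.measure_ball_pos μ 0 (half_pos hr)).ne'

end Convex

section LatticePoints

variable {ι : Type*}

theorem isClosedEmbedding_intCast_comp :
    Topology.IsClosedEmbedding fun v : ι → ℤ => (Int.cast ∘ v : ι → ℝ) :=
  .piMap fun _ => Int.isClosedEmbedding_coe_real

theorem range_intCast_comp_eq_span_basisFun [Finite ι] :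
    range (fun v : ι → ℤ => (Int.cast ∘ v : ι → ℝ)) =
      Submodule.span ℤ (range (Pi.basisFun ℝ ι)) := by
  ext x
  rw [SetLike.mem_coe, Module.Basis.mem_span_iff_repr_mem]
  simp only [Pi.basisFun_repr, mem_range, algebraMap_int_eq, eq_intCast, funext_iff,
    Function.comp_apply, Classical.skolem]

/-- The set of lattice points `v` with `v / m ∈ s`, where `v / 0 = 0`. -/
def scaledLatticePoints (m : ℕ) (s : Set (ι → ℝ)) : Set (ι → ℤ) :=
  {v | (m : ℝ)⁻¹ • (Int.cast ∘ v : ι → ℝ) ∈ s}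

theorem finite_scaledLatticePoints [Finite ι] {m : ℕ} (hm : m ≠ 0) {s : Set (ι → ℝ)}
    (hs : Bornology.IsBounded s) : (scaledLatticePoints m s).Finite := by
  cases nonempty_fintype ι
  have hK : IsCompact ((m : ℝ) • closure s) := hs.isCompact_closure.smul _
  have hfin := (isClosedEmbedding_intCast_comp.isCompact_preimage hK).finite_of_discrete
  refine hfin.subset fun v hv => ?_
  exact (mem_smul_set_iff_inv_smul_mem₀ (Nat.cast_ne_zero.2 hm) _ _).2 (subset_closure hv)

theorem card_inter_smul_span_basisFun [Finite ι] {m : ℕ} (hm : m ≠ 0) (s : Set (ι → ℝ)) :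
    Nat.card ↑(s ∩ (m : ℝ)⁻¹ • (Submodule.span ℤ (range (Pi.basisFun ℝ ι)) : Set (ι → ℝ))) =
      (scaledLatticePoints m s).ncard := by
  have hinj : Function.Injective fun v : ι → ℤ => (m : ℝ)⁻¹ • (Int.cast ∘ v : ι → ℝ) :=
    (smul_right_injective _ (inv_ne_zero (Nat.cast_ne_zero.2 hm))).comp
      Int.cast_injective.comp_left
  rw [Nat.card_coe_set_eq, ← ncard_image_of_injective _ hinj,
    ← range_intCast_comp_eq_span_basisFun, ← image_smul, ← range_comp, inter_comm,
    ← image_preimage_eq_range_inter]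
  rfl

theorem tendsto_encard_scaledLatticePoints [Fintype ι] {s : Set (ι → ℝ)}
    (hs : Bornology.IsBounded s) (hs_meas : MeasurableSet s)
    (hs_frontier : volume (frontier s) = 0) :
    Tendsto (fun m : ℕ => ((scaledLatticePoints m s).encard : ENNReal) /
      (m : ENNReal) ^ Fintype.card ι) atTop (𝓝 (volume s)) := by
  have hlim := ENNReal.tendsto_ofReal
    (tendsto_card_div_pow_atTop_volume s hs hs_meas hs_frontier)
  rw [measureReal_def, ENNReal.ofReal_toReal hs.measure_lt_top.ne] at hlim
  refine hlim.congr' ?_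
  filter_upwards [eventually_ne_atTop 0] with m hm
  have hpos : (0 : ℝ) < (m : ℝ) ^ Fintype.card ι := by positivity
  rw [card_inter_smul_span_basisFun hm, ENNReal.ofReal_div_of_pos hpos,
    ENNReal.ofReal_pow (Nat.cast_nonneg m), ENNReal.ofReal_natCast, ENNReal.ofReal_natCast,
    ← (finite_scaledLatticePoints hm hs).cast_ncard_eq]
  rfl

end LatticePoints

section OkounkovBody

variable {ι : Type*}

/-- The inclusion of the lattice `ℤ × ℤ^ι` into `ℝ × ℝ^ι`. -/
def latticeEmbedding (ι : Type*) : ℤ × (ι → ℤ) →+ ℝ × (ι → ℝ) :=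
  (Int.castAddHom ℝ).prodMap ((Int.castAddHom ℝ).compLeft ι)

/-- The convex cone generated by a semigroup of lattice points, not yet closed. -/
def semigroupCone (S : AddSubmonoid (ℤ × (ι → ℤ))) : PointedCone ℝ (ℝ × (ι → ℝ)) :=
  PointedCone.hull ℝ (latticeEmbedding ι '' S)

/-- The Newton–Okounkov body `Δ(S)`: the slice at height `1` of the closed cone of `S`. -/
def okounkovBody (S : AddSubmonoid (ℤ × (ι → ℤ))) : Set (ι → ℝ) :=
  {x | ((1 : ℝ), x) ∈ closure (semigroupCone S : Set (ℝ × (ι → ℝ)))}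

/-- The slice at height `1` of the interior of the cone of `S`. -/
def openOkounkovBody (S : AddSubmonoid (ℤ × (ι → ℤ))) : Set (ι → ℝ) :=
  {x | ((1 : ℝ), x) ∈ interior (semigroupCone S : Set (ℝ × (ι → ℝ)))}

/-- The set of lattice points of `S` at height `m`. -/
def levelSet (S : AddSubmonoid (ℤ × (ι → ℤ))) (m : ℕ) : Set (ι → ℤ) :=
  {v | ((m : ℤ), v) ∈ S}

variable {S : AddSubmonoid (ℤ × (ι → ℤ))}

theorem inv_smul_latticeEmbedding {m : ℕ} (hm : m ≠ 0) (v : ι → ℤ) :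
    (m : ℝ)⁻¹ • latticeEmbedding ι (m, v) = (1, (m : ℝ)⁻¹ • (Int.cast ∘ v : ι → ℝ)) := by
  refine Prod.ext ?_ rfl
  simp [latticeEmbedding, hm]

theorem levelSet_subset_scaledLatticePoints {m : ℕ} (hm : m ≠ 0) :
    levelSet S m ⊆ scaledLatticePoints m (okounkovBody S) := by
  intro v hv
  have hmem : latticeEmbedding ι (m, v) ∈ semigroupCone S :=
    Submodule.subset_span (mem_image_of_mem _ hv)
  have := (semigroupCone S).smul_mem (inv_nonneg.2 (Nat.cast_nonneg m)) hmem
  rw [inv_smul_latticeEmbedding hm] at this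
  exact subset_closure this

theorem convex_slice {Q : Set (ℝ × (ι → ℝ))} (hQ : Convex ℝ Q) (t : ℝ) :
    Convex ℝ {x | (t, x) ∈ Q} := by
  intro x hx y hy a b ha hb hab
  have := hQ hx hy ha hb hab
  rwa [Prod.smul_mk, Prod.smul_mk, Prod.mk_add_mk, ← add_smul, hab, one_smul] at this

theorem convex_okounkovBody : Convex ℝ (okounkovBody S) :=
  convex_slice (PointedCone.convex _).closure 1

theorem convex_openOkounkovBody : Convex ℝ (openOkounkovBody S) :=
  convex_slice (PointedCone.convex _).interior 1

theorem isClosed_okounkovBody : IsClosed (okounkovBody S) :=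
  isClosed_closure.preimage (by fun_prop)

theorem isOpen_openOkounkovBody : IsOpen (openOkounkovBody S) :=
  isOpen_interior.preimage (by fun_prop)

theorem openOkounkovBody_subset : openOkounkovBody S ⊆ okounkovBody S :=
  fun _ hx => subset_closure (interior_subset hx)

section Finite

variable [Finite ι]

theorem tendsto_latticeEmbedding_cofinite_cocompact :
    Tendsto (latticeEmbedding ι) cofinite (cocompact (ℝ × (ι → ℝ))) := by
  cases nonempty_fintype ι
  have := (Int.isClosedEmbedding_coe_real.prodMap
    (isClosedEmbedding_intCast_comp (ι := ι))).tendsto_cocompact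
  rwa [cocompact_eq_cofinite] at this

theorem span_range_latticeEmbedding : Submodule.span ℝ (range (latticeEmbedding ι)) = ⊤ := by
  classical
  cases nonempty_fintype ι
  refine eq_top_iff.2 fun y _ => ?_
  have hy : y = y.1 • latticeEmbedding ι (1, 0) +
      ∑ i, y.2 i • latticeEmbedding ι (0, Pi.single i 1) := by
    ext j
    · simp [latticeEmbedding, Prod.fst_sum]
    · simp [latticeEmbedding, Prod.snd_sum, Pi.single_apply]
  have hmem (z) : latticeEmbedding ι z ∈ Submodule.span ℝ (range (latticeEmbedding ι)) :=
    Submodule.subset_span (mem_range_self z)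
  rw [hy]
  exact add_mem (Submodule.smul_mem _ _ (hmem _))
    (sum_mem fun i _ => Submodule.smul_mem _ _ (hmem _))

theorem interior_semigroupCone_nonempty
    (hS : AddSubgroup.closure (S : Set (ℤ × (ι → ℤ))) = ⊤) :
    (interior (semigroupCone S : Set (ℝ × (ι → ℝ)))).Nonempty := by
  cases nonempty_fintype ι
  exact interior_hull_nonempty <| top_le_iff.1 <|
    span_range_latticeEmbedding.symm.trans_le (span_range_le_span_image _ hS)

theorem okounkovBody_subset_closure_openOkounkovBody
    (hS : AddSubgroup.closure (S : Set (ℤ × (ι → ℤ))) = ⊤) :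
    okounkovBody S ⊆ closure (openOkounkovBody S) := by
  cases nonempty_fintype ι
  exact slice_closure_subset_closure_slice_interior (interior_semigroupCone_nonempty hS)

theorem eventually_scaledLatticePoints_subset_levelSet
    (hS : AddSubgroup.closure (S : Set (ℤ × (ι → ℤ))) = ⊤) {K : Set (ι → ℝ)} (hK : IsCompact K)
    (hKS : K ⊆ openOkounkovBody S) :
    ∀ᶠ m : ℕ in atTop, scaledLatticePoints m K ⊆ levelSet S m := by
  cases nonempty_fintype ι
  have hK' : IsCompact (Prod.mk (1 : ℝ) '' K) := hK.image (by fun_prop)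
  have hmem := eventually_forall_smul_map_mem_imp_mem (φ := latticeEmbedding ι)
    tendsto_latticeEmbedding_cofinite_cocompact hS hK' (image_subset_iff.2 hKS)
  have hinv : Tendsto (fun m : ℕ => (m : ℝ)⁻¹) atTop (𝓝[>] 0) :=
    tendsto_inv_atTop_nhdsGT_zero.comp tendsto_natCast_atTop_atTop
  filter_upwards [hinv.eventually hmem, eventually_ne_atTop 0] with m hm hm0 v hv
  refine hm (m, v) ?_
  rw [inv_smul_latticeEmbedding hm0]
  exact mem_image_of_mem _ hv

theorem isBounded_okounkovBody_of_le_closure {κ : Type*} [Finite κ] {w : κ → ι → ℤ}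
    (hS : S ≤ AddSubmonoid.closure (range fun k => ((1 : ℤ), w k))) :
    Bornology.IsBounded (okounkovBody S) := by
  cases nonempty_fintype ι
  cases nonempty_fintype κ
  let W : ℝ := ∑ k, ‖(Int.cast ∘ w k : ι → ℝ)‖
  set s : Set (ℝ × (ι → ℝ)) := range fun k => latticeEmbedding ι (1, w k)
  have hle : AddSubmonoid.closure (range fun k => ((1 : ℤ), w k)) ≤
      (PointedCone.hull ℝ s).toAddSubmonoid.comap (latticeEmbedding ι) := by
    refine (AddSubmonoid.closure_le).2 ?_
    rintro _ ⟨k, rfl⟩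
    exact Submodule.subset_span (mem_range_self k)
  have hcone : semigroupCone S ≤ PointedCone.hull ℝ s :=
    Submodule.span_le.2 (image_subset_iff.2 (hS.trans hle))
  have hs : ∀ y ∈ s, ‖y.2‖ ≤ W * y.1 := by
    rintro _ ⟨k, rfl⟩
    have := Finset.single_le_sum (f := fun k => ‖(Int.cast ∘ w k : ι → ℝ)‖)
      (fun _ _ => norm_nonneg _) (Finset.mem_univ k)
    rw [show (latticeEmbedding ι (1, w k)).1 = 1 from Int.cast_one, mul_one]
    exact this
  refine (Metric.isBounded_closedBall (x := 0) (r := W)).subset fun x hx => ?_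
  simpa using norm_snd_le_of_mem_closure_hull hs (closure_mono hcone hx)

end Finite

variable [Fintype ι]

theorem volume_openOkounkovBody (hS : AddSubgroup.closure (S : Set (ℤ × (ι → ℤ))) = ⊤) :
    volume (openOkounkovBody S) = volume (okounkovBody S) := by
  refine le_antisymm (measure_mono openOkounkovBody_subset) ?_
  rw [← measure_closure_of_null_frontier
    ((convex_openOkounkovBody (S := S)).addHaar_frontier volume)]
  exact measure_mono (okounkovBody_subset_closure_openOkounkovBody hS)

theorem isBounded_okounkovBody_of_volume_ne_top
    (hS : AddSubgroup.closure (S : Set (ℤ × (ι → ℤ))) = ⊤) (hvol : volume (okounkovBody S) ≠ ⊤) :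
    Bornology.IsBounded (okounkovBody S) := by
  have hcl := okounkovBody_subset_closure_openOkounkovBody hS
  rcases (openOkounkovBody S).eq_empty_or_nonempty with hempty | hne
  · rw [hempty, closure_empty] at hcl
    exact Bornology.isBounded_empty.subset hcl
  · refine isBounded_of_convex_of_measure_ne_top volume convex_okounkovBody (hne.mono ?_) hvol
    exact interior_maximal openOkounkovBody_subset isOpen_openOkounkovBody

theorem eventually_lt_encard_levelSet (hS : AddSubgroup.closure (S : Set (ℤ × (ι → ℤ))) = ⊤)
    {a : ENNReal} (ha : a < volume (okounkovBody S)) :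
    ∀ᶠ m : ℕ in atTop,
      a < ((levelSet S m).encard : ENNReal) / (m : ENNReal) ^ Fintype.card ι := by
  rw [← volume_openOkounkovBody hS] at ha
  obtain ⟨K, hKS, hK, haK⟩ := isOpen_openOkounkovBody.exists_lt_isCompact ha
  obtain ⟨t, htS, ht, hKt⟩ := exists_finite_subset_subset_convexHull hK isOpen_openOkounkovBody hKS
  have hcomp : IsCompact (convexHull ℝ t) := ht.isCompact_convexHull ℝ
  have hlim := tendsto_encard_scaledLatticePoints hcomp.isBounded hcomp.measurableSet
    ((convex_convexHull ℝ t).addHaar_frontier volume)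
  filter_upwards [hlim.eventually (lt_mem_nhds (haK.trans_le (measure_mono hKt))),
    eventually_scaledLatticePoints_subset_levelSet hS hcomp
      (convexHull_min htS convex_openOkounkovBody)] with m ham hm
  refine ham.trans_le ?_
  gcongr

theorem eventually_encard_levelSet_lt (hS : AddSubgroup.closure (S : Set (ℤ × (ι → ℤ))) = ⊤)
    {a : ENNReal} (ha : volume (okounkovBody S) < a) :
    ∀ᶠ m : ℕ in atTop,
      ((levelSet S m).encard : ENNReal) / (m : ENNReal) ^ Fintype.card ι < a := by
  have hlim := tendsto_encard_scaledLatticePoints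
    (isBounded_okounkovBody_of_volume_ne_top hS ha.ne_top) isClosed_okounkovBody.measurableSet
    (convex_okounkovBody.addHaar_frontier volume)
  filter_upwards [hlim.eventually (gt_mem_nhds ha), eventually_ne_atTop 0] with m ham hm
  refine lt_of_le_of_lt ?_ ham
  gcongr
  exact levelSet_subset_scaledLatticePoints hm

theorem semigroup_okounkov_volume_general (S : AddSubmonoid (ℤ × (ι → ℤ)))
    (hS : AddSubgroup.closure (S : Set (ℤ × (ι → ℤ))) = ⊤) :
    Tendsto (fun m : ℕ => ((levelSet S m).encard : ENNReal) / (m : ENNReal) ^ Fintype.card ι)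
      atTop (𝓝 (volume (okounkovBody S))) :=
  tendsto_order.2
    ⟨fun _ => eventually_lt_encard_levelSet hS, fun _ => eventually_encard_levelSet_lt hS⟩

end OkounkovBody

section NatHeight

/-- The inclusion of `ℕ × ℤ^ι` into the lattice `ℤ × ℤ^ι`. -/
def natToIntHeight (ι : Type*) : ℕ × (ι → ℤ) →+ ℤ × (ι → ℤ) :=
  (Nat.castAddMonoidHom ℤ).prodMap (AddMonoidHom.id _)

variable {ι : Type*} (T : AddSubmonoid (ℕ × (ι → ℤ)))

theorem levelSet_map_natToIntHeight (m : ℕ) :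
    levelSet (T.map (natToIntHeight ι)) m = {v | (m, v) ∈ T} := by
  have hinj : Function.Injective (natToIntHeight ι) :=
    Nat.cast_injective.prodMap Function.injective_id
  ext v
  exact AddSubmonoid.mem_map_iff_mem hinj (x := (m, v))

theorem okounkovBody_map_natToIntHeight :
    okounkovBody (T.map (natToIntHeight ι)) =
      {x : ι → ℝ | ((1 : ℝ), x) ∈ closure (convexHull ℝ {y : ℝ × (ι → ℝ) |
        ∃ c : ℝ, 0 ≤ c ∧ ∃ g ∈ T, y = c • ((g.1 : ℝ), fun i => (g.2 i : ℝ))})} := by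
  have hcone := convexHull_rays_eq_hull
    (fun g : ℕ × (ι → ℤ) => ((g.1 : ℝ), fun i => (g.2 i : ℝ))) (T := T) ⟨0, T.zero_mem⟩
  have himage : latticeEmbedding ι '' (T.map (natToIntHeight ι)) =
      (fun g : ℕ × (ι → ℤ) => ((g.1 : ℝ), fun i => (g.2 i : ℝ))) '' T := by
    rw [AddSubmonoid.coe_map, image_image]
    exact image_congr fun g _ => Prod.ext (Int.cast_natCast g.1) rfl
  rw [← himage] at hcone
  exact congrArg (fun C : Set (ℝ × (ι → ℝ)) => {x | ((1 : ℝ), x) ∈ closure C}) hcone.symm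

end NatHeight

theorem toReal_encard {α : Type*} (s : Set α) : ((s.encard : ENNReal)).toReal = s.ncard := by
  rcases s.finite_or_infinite with hs | hs
  · rw [← hs.cast_ncard_eq]
    exact ENNReal.toReal_natCast _
  · rw [hs.encard_eq, hs.ncard]
    simp

/-- **The semigroup theorem of Kaveh–Khovanskii and Lazarsfeld–Mustață.**
Let `Γ ⊆ ℕ × ℤ^d` be an additive subsemigroup containing `(0,0)` such that:
(1) `Γ ∩ ({0} × ℤ^d) = {(0,0)}`;
(2) there are finitely many `w₁, …, w_r ∈ ℤ^d` with `Γ` contained in the sub(semi)group of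
`ℕ × ℤ^d` generated by `(1,w₁), …, (1,w_r)` (together with the zero element `(0,0)`);
(3) `Γ` generates `ℤ^{1+d}` as a group.
Let `C(Γ) ⊆ ℝ^{1+d}` be the closed convex cone generated by `Γ` and
`Δ(Γ) = {x ∈ ℝ^d : (1,x) ∈ C(Γ)}`.  Then `#{v : (m,v) ∈ Γ} / m^d` converges as `m → ∞`
to the `d`-dimensional Lebesgue measure of `Δ(Γ)`. -/
theorem semigroup_okounkov_volume
    (d : ℕ) (Γ : Set (ℕ × (Fin d → ℤ)))
    (hzero : (0, 0) ∈ Γ)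
    (hadd : ∀ x ∈ Γ, ∀ y ∈ Γ, x + y ∈ Γ)
    (h1 : ∀ v : Fin d → ℤ, (0, v) ∈ Γ → v = 0)
    (h2 : ∃ (r : ℕ) (w : Fin r → (Fin d → ℤ)),
      Γ ⊆ (AddSubmonoid.closure (Set.range fun i => ((1 : ℕ), w i)) : Set (ℕ × (Fin d → ℤ))))
    (h3 : AddSubgroup.closure
      ((fun g : ℕ × (Fin d → ℤ) => ((g.1 : ℤ), g.2)) '' Γ) = (⊤ : AddSubgroup (ℤ × (Fin d → ℤ)))) :
    Tendsto
      (fun m : ℕ => ({v : Fin d → ℤ | (m, v) ∈ Γ}.ncard : ℝ) / (m : ℝ) ^ d)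
      atTop
      (nhds ((volume {x : Fin d → ℝ |
        ((1 : ℝ), x) ∈ closure (convexHull ℝ
          {y : ℝ × (Fin d → ℝ) | ∃ c : ℝ, 0 ≤ c ∧ ∃ g ∈ Γ,
            y = c • ((g.1 : ℝ), fun i => (g.2 i : ℝ))})}).toReal)) := by
  let T : AddSubmonoid (ℕ × (Fin d → ℤ)) := ⟨⟨Γ, fun hx hy => hadd _ hx _ hy⟩, hzero⟩
  obtain ⟨r, w, hw⟩ := h2
  have hle : T.map (natToIntHeight (Fin d)) ≤
      AddSubmonoid.closure (range fun i => ((1 : ℤ), w i)) := by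
    refine (AddSubmonoid.monotone_map (show T ≤ _ from hw)).trans_eq ?_
    rw [AddMonoidHom.map_mclosure, ← range_comp]
    rfl
  have hvol := (isBounded_okounkovBody_of_le_closure hle).measure_lt_top (μ := volume).ne
  have hlim := (ENNReal.tendsto_toReal hvol).comp
    (semigroup_okounkov_volume_general (T.map (natToIntHeight (Fin d))) h3)
  rw [okounkovBody_map_natToIntHeight] at hlim
  refine hlim.congr fun m => ?_
  rw [Function.comp_apply, levelSet_map_natToIntHeight, ENNReal.toReal_div, toReal_encard,
    ENNReal.toReal_pow, ENNReal.toReal_natCast, Fintype.card_fin]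
  rfl
end

section
/- Let d ≥ 2 be an integer and define vectors e₁, …, e_{d+1} ∈ ℤ^d by: e₁ = (0, …, 0), e₂ = (1, 0, …, 0), and for 3 ≤ i ≤ d+1, e_i = (1, 0, …, 0, 1, 0, …, 0) with the second 1 in coordinate i−1. Let δ > 0 be a real number, let m and p be positive integers, and let v = (v₁, 0, …, 0) ∈ ℤ^d with v₁ ≤ −δm. Then the map (a₀, a₁, …, a_{d+1}) ↦ a₀·v + Σ_{i=1}^{d+1} a_i·e_i is injective on the set {(a₀, …, a_{d+1}) ∈ ℕ^{d+2} : a₀·m + Σ_{i=1}^{d+1} a_i = p·m and a₂ < δm}. -/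
/-!
The vectors `e₂, …, e_{d+1}` are linearly independent, and `v` is the multiple `v₁` of `e₂`. So
the image of `a` determines `a₃, …, a_{d+1}` and the coefficient `a₀ v₁ + a₂` of `e₂`. Since
`0 ≤ a₂ < δ m ≤ -v₁`, the latter is a division with remainder by `-v₁`, which recovers `a₀` and
`a₂`. As `e₁ = 0`, the remaining entry `a₁` comes from the degree `a₀ m + ∑ aᵢ`.
-/

open Set

theorem eq_of_zsmul_add_eq_zsmul_add {G : Type*} [AddCommGroup G] [PartialOrder G]
    [IsOrderedAddMonoid G] {k r r' : G} {q q' : ℤ} (hr : r ∈ Ico 0 k) (hr' : r' ∈ Ico 0 k)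
    (h : q • k + r = q' • k + r') : q = q' := by
  have mem_Ico {q : ℤ} {r : G} (hr : r ∈ Ico 0 k) : q • k + r ∈ Ico (q • k) ((q + 1) • k) := by
    simpa [add_zsmul] using hr
  by_contra hq
  exact disjoint_left.1 (pairwise_disjoint_Ico_zsmul k hq) (mem_Ico hr) (h ▸ mem_Ico hr')

theorem linearIndependent_ite_eq_or_eq (R : Type*) [Ring R] {ι : Type*} [DecidableEq ι] (i₀ : ι) :
    LinearIndependent R fun i j : ι ↦ if j = i₀ ∨ j = i then (1 : R) else 0 := by
  let c : ι → R := fun i ↦ if i = i₀ then 0 else 1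
  have shear : (fun i j : ι ↦ if j = i₀ ∨ j = i then (1 : R) else 0) =
      (fun i ↦ Pi.single i 1) + fun i ↦ c i • Pi.single i₀ 1 := by
    ext i j
    by_cases hi : i = i₀ <;> by_cases hj : j = i₀ <;> simp_all [c, Pi.single_apply, eq_comm]
  rw [shear]
  exact (linearIndependent_add_smul_iff (by simp [c])).2 (Pi.linearIndependent_single_one ι R)

section Ring

variable {R M : Type*} [Ring R] [PartialOrder R] [IsStrictOrderedRing R] [AddCommGroup M]
  [Module R M] {c : R}

theorem injOn_natCast_smul_add_sum_natCast_smul {ι : Type*} [Fintype ι] {w : ι → M}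
    (hw : LinearIndependent R w) (i₀ : ι) :
    InjOn (fun x : ℕ × (ι → ℕ) ↦ (x.1 : R) • c • w i₀ + ∑ i, (x.2 i : R) • w i)
      {x | (x.2 i₀ : R) < -c} := by
  classical
  have combine (q : ℕ) (r : ι → ℕ) : (q : R) • c • w i₀ + ∑ i, (r i : R) • w i =
      ∑ i, ((if i = i₀ then (q : R) * c else 0) + r i) • w i := by
    simp [add_smul, Finset.sum_add_distrib, mul_smul]
  rintro ⟨q, r⟩ hr ⟨q', r'⟩ hr' h
  simp only [combine] at h
  have coeff_eq := Fintype.linearIndependent_iffₛ.1 hw _ _ h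
  have quot_eq : q = q' := by
    have h₀ : (-q : ℤ) • (-c) + r i₀ = (-q' : ℤ) • (-c) + r' i₀ := by simpa using coeff_eq i₀
    simpa using eq_of_zsmul_add_eq_zsmul_add ⟨Nat.cast_nonneg _, hr⟩ ⟨Nat.cast_nonneg _, hr'⟩ h₀
  subst quot_eq
  exact Prod.ext rfl (funext fun i ↦ Nat.cast_injective (add_left_cancel (coeff_eq i)))

theorem injOn_truncation_lemma_general {d : ℕ} [NeZero d] {e : Fin (d + 1) → M} {v : M}
    (he₀ : e 0 = 0) (he : LinearIndependent R fun i : Fin d ↦ e i.succ) (hv : v = c • e 1)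
    (m N : ℕ) :
    InjOn (fun a : Fin (d + 2) → ℕ ↦ (a 0 : R) • v + ∑ i : Fin (d + 1), (a i.succ : R) • e i)
      {a | a 0 * m + ∑ i : Fin (d + 1), a i.succ = N ∧ (a 2 : R) < -c} := by
  have two_eq : (2 : Fin (d + 2)) = (0 : Fin d).succ.succ := by simp
  rintro a ⟨ha, ha₂⟩ b ⟨hb, hb₂⟩ hab
  rw [two_eq] at ha₂ hb₂
  simp only [hv, Fin.sum_univ_succ (n := d), he₀, smul_zero, zero_add,
    ← Fin.succ_zero_eq_one'] at hab
  obtain ⟨h₀, h_tail⟩ : a 0 = b 0 ∧ (fun i : Fin d ↦ a i.succ.succ) = fun i ↦ b i.succ.succ :=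
    Prod.ext_iff.1 (injOn_natCast_smul_add_sum_natCast_smul he 0
      (x₁ := (a 0, fun i ↦ a i.succ.succ)) (x₂ := (b 0, fun i ↦ b i.succ.succ)) ha₂ hb₂ hab)
  have h₁ : a (Fin.succ 0) = b (Fin.succ 0) := by
    simp only [Fin.sum_univ_succ (n := d), h₀, congrFun h_tail] at ha hb
    omega
  exact funext (Fin.cases h₀ (Fin.cases h₁ (congrFun h_tail)))

end Ring

/-- Combinatorial injectivity lemma for the finiteness of the truncated divisors.
Let `d ≥ 2`, let `e₁, …, e_{d+1} ∈ ℤ^d` be the vectors `e₁ = 0`, `e₂ = (1,0,…,0)` and,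
for `3 ≤ i ≤ d+1`, `e_i = (1,0,…,0,1,0,…,0)` with the second `1` in coordinate `i−1`
(here `e (t : Fin (d+1))` is the vector `e_{t+1}`, so `e t` has a `1` in coordinate `1`
(1-indexed) and, when `t ≥ 2`, a `1` in coordinate `t − 1 + 1` (1-indexed), i.e. the
0-indexed coordinates `0` and `t − 1`).  Let `δ > 0`, let `m, p` be positive integers and
`v = (v₁, 0, …, 0) ∈ ℤ^d` with `v₁ ≤ −δm`.  Then
`(a₀, a₁, …, a_{d+1}) ↦ a₀·v + Σᵢ aᵢ·eᵢ` is injective on the set of tuples in `ℕ^{d+2}`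
with `a₀·m + Σ_{i=1}^{d+1} aᵢ = p·m` and `a₂ < δm`. -/
theorem injOn_truncation_lemma
    (d : ℕ) (hd : 2 ≤ d)
    (e : Fin (d + 1) → (Fin d → ℤ))
    (he0 : e 0 = 0)
    (het : ∀ t : Fin (d + 1), 1 ≤ (t : ℕ) →
      e t = fun j : Fin d => if (j : ℕ) = 0 ∨ (j : ℕ) = (t : ℕ) - 1 then 1 else 0)
    (δ : ℝ) (hδ : 0 < δ) (m p : ℕ) (hm : 0 < m) (hp : 0 < p)
    (v : Fin d → ℤ)
    (hv1 : (v ⟨0, by omega⟩ : ℝ) ≤ -(δ * m))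
    (hv0 : ∀ j : Fin d, (j : ℕ) ≠ 0 → v j = 0) :
    Set.InjOn
      (fun a : Fin (d + 2) → ℕ =>
        (a 0 : ℤ) • v + ∑ i : Fin (d + 1), (a i.succ : ℤ) • e i)
      {a : Fin (d + 2) → ℕ |
        a 0 * m + ∑ i : Fin (d + 1), a i.succ = p * m ∧ ((a 2 : ℝ) < δ * m)} := by
  have : NeZero d := ⟨by omega⟩
  have e_succ (i : Fin d) : e i.succ = fun j ↦ if j = 0 ∨ j = i then 1 else 0 := by
    simp [het i.succ, Fin.val_inj]
  have he : LinearIndependent ℤ fun i : Fin d ↦ e i.succ := by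
    simpa only [e_succ] using linearIndependent_ite_eq_or_eq ℤ (0 : Fin d)
  have hv : v = v 0 • e 1 := by
    rw [← Fin.succ_zero_eq_one', e_succ]
    ext j
    by_cases hj : j = 0
    · simp [hj]
    · simp [hj, hv0 j (Fin.val_ne_zero_iff.2 hj)]
  refine (injOn_truncation_lemma_general he0 he hv m (p * m)).mono ?_
  exact fun a ha ↦ ⟨ha.1, mod_cast ha.2.trans_le (le_neg_of_le_neg hv1)⟩
end

section
/- Let d ≥ 1 be an integer, δ > 0 a real number, and m a positive integer with δm ≥ 1. For each positive integer p define Z(p) = {(a₀, a₁, …, a_{d+1}) ∈ ℕ^{d+2} : a₀·m + Σ_{i=1}^{d+1} a_i = p·m, p/(δ+1) ≤ a₀ ≤ p, and a₂ < δm}. Then liminf_{p→∞} #Z(p) / (p·m)^d ≥ δ^{d+1} / (d!·(1+δ)^d). -/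
open Filter

/-! Put `k = p - a₀`. The bounds on `a₀` become `k ≤ K(p) := ⌊δp/(1+δ)⌋`, and `(a₁, …, a_{d+1})`
ranges over the tuples with sum `km` whose second entry is less than `N := ⌈δm⌉`. Fixing that entry
and counting the others by stars and bars, there are `∼ N (km)^(d-1) / (d-1)!` such tuples, and
Stolz–Cesàro against the hockey-stick identity sums this over `k ≤ K(p)` to
`∼ N m^(d-1) K(p)^d / d!`. Hence `#Z(p) / (pm)^d` even converges, to `(N/m) (δ/(1+δ))^d / d!`, and
`N/m ≥ δ`. -/

section Asymptotics

open Topology Asymptotics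

theorem tendsto_sum_range_div_sum_range {f g : ℕ → ℝ} {c : ℝ}
    (h : Tendsto (fun n => f n / g n) atTop (𝓝 c)) (hg : 0 ≤ g) (hg₀ : ∀ᶠ n in atTop, g n ≠ 0)
    (hsum : Tendsto (fun n => ∑ i ∈ Finset.range n, g i) atTop atTop) :
    Tendsto (fun n => (∑ i ∈ Finset.range n, f i) / ∑ i ∈ Finset.range n, g i) atTop (𝓝 c) := by
  have hsub : (fun n => f n - c * g n) =o[atTop] g := by
    rw [isLittleO_iff_tendsto' (hg₀.mono fun n hn h0 => absurd h0 hn)]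
    refine (tendsto_sub_nhds_zero_iff.2 h).congr' ?_
    filter_upwards [hg₀] with n hn
    field_simp
  refine tendsto_sub_nhds_zero_iff.1 ((hsub.sum_range hg hsum).tendsto_div_nhds_zero.congr' ?_)
  filter_upwards [hsum.eventually_ne_atTop 0] with n hn
  rw [Finset.sum_sub_distrib, ← Finset.mul_sum]
  field_simp

theorem tendsto_choose_div_pow (k : ℕ) :
    Tendsto (fun n : ℕ => (n.choose k : ℝ) / (n : ℝ) ^ k) atTop (𝓝 (k.factorial : ℝ)⁻¹) := by
  have hrefl : (fun n : ℕ => (n : ℝ) ^ k) ~[atTop] fun n => (n : ℝ) ^ k := .refl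
  refine ((isEquivalent_choose k).div hrefl).symm.tendsto_nhds
    (tendsto_const_nhds.congr' ?_)
  filter_upwards [eventually_ne_atTop 0] with n hn
  simp only [Pi.div_apply]
  field_simp

theorem sum_range_choose_right (n k : ℕ) :
    ∑ i ∈ Finset.range n, i.choose k = n.choose (k + 1) := by
  induction n with
  | zero => rfl
  | succ n ih => rw [Finset.sum_range_succ, ih, Nat.choose_succ_succ', add_comm]

theorem tendsto_sum_range_div_pow {f : ℕ → ℝ} {c : ℝ} {k : ℕ}
    (h : Tendsto (fun n => f n / (n : ℝ) ^ k) atTop (𝓝 c)) :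
    Tendsto (fun n => (∑ i ∈ Finset.range n, f i) / (n : ℝ) ^ (k + 1)) atTop
      (𝓝 (c / (k + 1))) := by
  have hchoose_pos (j : ℕ) : ∀ᶠ n : ℕ in atTop, 0 < (n.choose j : ℝ) :=
    (eventually_ge_atTop j).mono fun n hn => by exact_mod_cast Nat.choose_pos hn
  have hsum (n : ℕ) : ∑ i ∈ Finset.range n, (i.choose k : ℝ) = n.choose (k + 1) := by
    exact_mod_cast sum_range_choose_right n k
  have hsum_top : Tendsto (fun n : ℕ => (n.choose (k + 1) : ℝ)) atTop atTop :=
    (isEquivalent_choose (k + 1)).symm.tendsto_atTop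
      (((tendsto_pow_atTop k.succ_ne_zero).comp tendsto_natCast_atTop_atTop).atTop_div_const
        (by positivity))
  have hratio : Tendsto (fun n => f n / (n.choose k : ℝ)) atTop (𝓝 (c * k.factorial)) := by
    have hquot := h.div (tendsto_choose_div_pow k) (by positivity)
    rw [div_inv_eq_mul] at hquot
    refine hquot.congr' ?_
    filter_upwards [eventually_ne_atTop 0] with n hn
    exact div_div_div_cancel_right₀ (by positivity) _ _
  have hstolz := tendsto_sum_range_div_sum_range hratio (fun n => by positivity)
    ((hchoose_pos k).mono fun n hn => hn.ne') (by simpa only [hsum] using hsum_top)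
  simp only [hsum] at hstolz
  have hlim : c * k.factorial * ((k + 1).factorial : ℝ)⁻¹ = c / (k + 1) := by
    rw [Nat.factorial_succ]
    push_cast
    field_simp
  rw [← hlim]
  refine (hstolz.mul (tendsto_choose_div_pow (k + 1))).congr' ?_
  filter_upwards [hchoose_pos (k + 1)] with n hn
  exact div_mul_div_cancel₀ hn.ne'

theorem tendsto_multichoose_sub_div_pow (k t : ℕ) :
    Tendsto (fun n : ℕ => ((k + 1).multichoose (n - t) : ℝ) / (n : ℝ) ^ k) atTop
      (𝓝 (k.factorial : ℝ)⁻¹) := by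
  have hshift : Tendsto (fun n => n - t + k) atTop atTop :=
    (tendsto_add_atTop_nat k).comp (tendsto_sub_atTop_nat t)
  have hratio : Tendsto (fun n : ℕ => ((n - t + k : ℕ) : ℝ) / n) atTop (𝓝 1) := by
    have hlim : Tendsto (fun n : ℕ => 1 + ((k : ℝ) - t) / n) atTop (𝓝 (1 + 0)) :=
      tendsto_const_nhds.add (tendsto_const_div_atTop_nhds_zero_nat _)
    rw [add_zero] at hlim
    refine hlim.congr' ?_
    filter_upwards [eventually_gt_atTop 0, eventually_ge_atTop t] with n hn ht
    rw [Nat.cast_add, Nat.cast_sub ht]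
    field_simp
    ring
  have hprod := ((tendsto_choose_div_pow k).comp hshift).mul (hratio.pow k)
  rw [one_pow, mul_one] at hprod
  refine hprod.congr' ?_
  filter_upwards [hshift.eventually_ne_atTop 0] with n hn
  have hmulti : (k + 1).multichoose (n - t) = (n - t + k).choose k := by
    rw [Nat.multichoose_eq, ← Nat.choose_symm_add]
    congr 1
    lia
  rw [Function.comp_apply, hmulti, div_pow]
  exact div_mul_div_cancel₀ (by positivity)

theorem tendsto_floor_mul_add_one_div {q : ℝ} (hq : 0 ≤ q) :
    Tendsto (fun p : ℕ => ((⌊q * p⌋₊ + 1 : ℕ) : ℝ) / p) atTop (𝓝 q) := by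
  have hlim := ((tendsto_nat_floor_mul_div_atTop hq).comp tendsto_natCast_atTop_atTop).add
    (tendsto_const_div_atTop_nhds_zero_nat (1 : ℝ))
  rw [add_zero] at hlim
  refine hlim.congr fun p => ?_
  rw [Nat.cast_add, Nat.cast_one, add_div]
  rfl

end Asymptotics

section Antidiagonal

open Finset Topology

variable {ι : Type*} [DecidableEq ι]

theorem card_piAntidiag_eq_multichoose (s : Finset ι) (n : ℕ) :
    #(s.piAntidiag n) = (#s).multichoose n := by
  rw [← card_finsuppAntidiag_nat_eq_multichoose]
  refine (card_nbij (fun f : ι →₀ ℕ => ⇑f) ?_ DFunLike.coe_injective.injOn ?_).symm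
  · intro f hf
    obtain ⟨hsum, hsupp⟩ := mem_finsuppAntidiag.1 hf
    exact mem_piAntidiag.2 ⟨hsum, fun i hi => hsupp (Finsupp.mem_support_iff.2 hi)⟩
  · intro f hf
    obtain ⟨hsum, hsupp⟩ := mem_piAntidiag.1 hf
    exact ⟨.onFinset s f hsupp, mem_finsuppAntidiag.2 ⟨hsum, Finsupp.support_onFinset_subset⟩, rfl⟩

theorem card_filter_piAntidiag_apply_eq {s : Finset ι} {i : ι} (hi : i ∈ s) {t n : ℕ}
    (ht : t ≤ n) :
    #{b ∈ s.piAntidiag n | b i = t} = #((s.erase i).piAntidiag (n - t)) := by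
  refine card_nbij' (fun b => Function.update b i 0) (fun c => Function.update c i t) ?_ ?_ ?_ ?_
  · intro b hb
    simp only [coe_filter, mem_piAntidiag, Set.mem_ofPred_eq] at hb
    obtain ⟨⟨hsum, hsupp⟩, hbi⟩ := hb
    rw [← add_sum_erase s b hi] at hsum
    refine mem_piAntidiag.2 ⟨?_, fun j hj => ?_⟩
    · rw [sum_update_of_notMem (notMem_erase i s)]
      lia
    · obtain rfl | hji := eq_or_ne j i
      · simp at hj
      · exact mem_erase.2 ⟨hji, hsupp j (by simpa [hji] using hj)⟩
  · intro c hc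
    obtain ⟨hsum, hsupp⟩ := mem_piAntidiag.1 hc
    simp only [coe_filter, mem_piAntidiag, Set.mem_ofPred_eq, Function.update_self, and_true]
    refine ⟨?_, fun j hj => ?_⟩
    · rw [sum_update_of_mem hi, sdiff_singleton_eq_erase, hsum]
      lia
    · obtain rfl | hji := eq_or_ne j i
      · exact hi
      · exact mem_of_mem_erase (hsupp j (by simpa [hji] using hj))
  · intro b hb
    simp only [coe_filter, Set.mem_ofPred_eq] at hb
    simp [← hb.2]
  · intro c hc
    have hci : c i = 0 := by
      by_contra h
      exact notMem_erase i s ((mem_piAntidiag.1 hc).2 i h)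
    simp [← hci]

theorem card_filter_piAntidiag_apply_lt {s : Finset ι} {i : ι} (hi : i ∈ s) {N n : ℕ}
    (hN : N ≤ n + 1) :
    #{b ∈ s.piAntidiag n | b i < N} = ∑ t ∈ range N, (#s - 1).multichoose (n - t) := by
  rw [card_eq_sum_card_fiberwise (f := (· i)) (t := range N) fun b hb => by
    simpa using (mem_filter.1 hb).2]
  refine sum_congr rfl fun t ht => ?_
  rw [mem_range] at ht
  rw [← card_erase_of_mem hi, ← card_piAntidiag_eq_multichoose,
    ← card_filter_piAntidiag_apply_eq hi (by lia), filter_filter]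
  congr! 3 with b
  exact and_iff_right_of_imp fun h => h ▸ ht

theorem tendsto_card_filter_piAntidiag_apply_lt_div_pow {s : Finset ι} {i : ι} (hi : i ∈ s) {k : ℕ}
    (hs : #s = k + 2) (N : ℕ) :
    Tendsto (fun n : ℕ => (#{b ∈ s.piAntidiag n | b i < N} : ℝ) / (n : ℝ) ^ k) atTop
      (𝓝 (N / k.factorial)) := by
  have hlim := tendsto_finsetSum (range N) fun t _ => tendsto_multichoose_sub_div_pow k t
  simp only [sum_const, card_range, nsmul_eq_mul, ← div_eq_mul_inv] at hlim
  refine hlim.congr' ?_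
  filter_upwards [eventually_ge_atTop N] with n hn
  rw [card_filter_piAntidiag_apply_lt hi (by lia), hs, Nat.cast_sum, sum_div]
  rfl

end Antidiagonal

section DeficitTuples

open Finset Topology

/-- The set `Z(p)` of the counting estimate, for the parameters `d`, `m` and `δ`. For `d = 0` the
index `2` wraps around to `0`, so the constraint on `a₂` is the intended one only when `1 ≤ d`. -/
def deficitTuples (d m : ℕ) (δ : ℝ) (p : ℕ) : Set (Fin (d + 2) → ℕ) :=
  {a | a 0 * m + ∑ i : Fin (d + 1), a i.succ = p * m ∧
    (p : ℝ) / (δ + 1) ≤ (a 0 : ℝ) ∧ a 0 ≤ p ∧ ((a 2 : ℕ) : ℝ) < δ * m}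

theorem div_add_one_le_cast_sub_iff {δ : ℝ} (hδ : 0 ≤ δ) {k p : ℕ} (hk : k ≤ p) :
    (p : ℝ) / (δ + 1) ≤ (p - k : ℕ) ↔ k ≤ ⌊δ / (1 + δ) * p⌋₊ := by
  have hsplit : (p : ℝ) / (δ + 1) = p - δ / (1 + δ) * p := by
    field_simp
    ring
  rw [Nat.le_floor_iff (by positivity), hsplit, Nat.cast_sub hk, sub_le_sub_iff_left]

theorem floor_div_one_add_mul_le {δ : ℝ} (hδ : 0 ≤ δ) (p : ℕ) : ⌊δ / (1 + δ) * p⌋₊ ≤ p := by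
  refine Nat.floor_le_of_le (mul_le_of_le_one_left p.cast_nonneg ?_)
  exact (div_le_one (by positivity)).2 (by linarith)

theorem cons_mem_deficitTuples_iff {e m : ℕ} {δ : ℝ} (hδ : 0 ≤ δ) {k p : ℕ} (hk : k ≤ p)
    (b : Fin (e + 2) → ℕ) :
    (Fin.cons (p - k) b : Fin (e + 1 + 2) → ℕ) ∈ deficitTuples (e + 1) m δ p ↔
      k ≤ ⌊δ / (1 + δ) * p⌋₊ ∧ ∑ i, b i = k * m ∧ b 1 < ⌈δ * m⌉₊ := by
  have hsum : (p - k) * m + ∑ i, b i = p * m ↔ ∑ i, b i = k * m := by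
    have := Nat.mul_le_mul_right m hk
    rw [Nat.sub_mul]
    lia
  have htwo : (Fin.cons (p - k) b : Fin (e + 1 + 2) → ℕ) 2 = b 1 := rfl
  simp only [deficitTuples, Set.mem_ofPred_eq, Fin.cons_zero, Fin.cons_succ, htwo, hsum,
    div_add_one_le_cast_sub_iff hδ hk, Nat.lt_ceil, Nat.sub_le, true_and]
  tauto

theorem ncard_deficitTuples (e m : ℕ) {δ : ℝ} (hδ : 0 ≤ δ) (p : ℕ) :
    (deficitTuples (e + 1) m δ p).ncard = ∑ k ∈ range (⌊δ / (1 + δ) * p⌋₊ + 1),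
      #{b ∈ (univ : Finset (Fin (e + 2))).piAntidiag (k * m) | b 1 < ⌈δ * m⌉₊} := by
  rw [← card_sigma, ← Set.ncard_coe_finset]
  have hfloor := floor_div_one_add_mul_le hδ p
  refine (Set.BijOn.ncard_eq (f := fun x : Σ _ : ℕ, Fin (e + 2) → ℕ =>
    (Fin.cons (p - x.1) x.2 : Fin (e + 1 + 2) → ℕ)) ⟨?_, ?_, ?_⟩).symm
  · rintro ⟨k, b⟩ hx
    simp only [mem_coe, mem_sigma, mem_range, mem_filter, mem_piAntidiag] at hx
    exact (cons_mem_deficitTuples_iff hδ (by lia) b).2 ⟨by lia, hx.2.1.1, hx.2.2⟩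
  · rintro ⟨k, b⟩ hx ⟨k', b'⟩ hx' h
    simp only [mem_coe, mem_sigma, mem_range] at hx hx'
    obtain ⟨hk, rfl⟩ := Fin.cons_inj.1 h
    obtain rfl : k = k' := by lia
    rfl
  · intro a ha
    have hcons : Fin.cons (p - (p - a 0)) (Fin.tail a) = a := by
      rw [Nat.sub_sub_self ha.2.2.1, Fin.cons_self_tail]
    rw [← hcons, cons_mem_deficitTuples_iff hδ (Nat.sub_le _ _)] at ha
    refine ⟨⟨p - a 0, Fin.tail a⟩, ?_, hcons⟩
    simp only [mem_coe, mem_sigma, mem_range, mem_filter, mem_piAntidiag]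
    exact ⟨by lia, ⟨ha.2.1, fun i _ => mem_univ i⟩, ha.2.2⟩

theorem tendsto_ncard_deficitTuples_div_pow (e : ℕ) {m : ℕ} (hm : 0 < m) {δ : ℝ} (hδ : 0 < δ) :
    Tendsto (fun p : ℕ => ((deficitTuples (e + 1) m δ p).ncard : ℝ) / ((p : ℝ) * m) ^ (e + 1))
      atTop (𝓝 (⌈δ * m⌉₊ / m * (δ / (1 + δ)) ^ (e + 1) / (e + 1).factorial)) := by
  set N := ⌈δ * m⌉₊
  set q := δ / (1 + δ)
  set slice : ℕ → ℝ := fun k =>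
    (#{b ∈ (univ : Finset (Fin (e + 2))).piAntidiag (k * m) | b 1 < N} : ℕ)
  have hslice_lim : Tendsto (fun k => slice k / (k : ℝ) ^ e) atTop
      (𝓝 (N / e.factorial * m ^ e)) := by
    have hmul : Tendsto (· * m) atTop atTop := tendsto_id.atTop_mul_const' hm
    refine (((tendsto_card_filter_piAntidiag_apply_lt_div_pow (mem_univ (1 : Fin (e + 2)))
      (card_fin _) N).comp hmul).mul_const ((m : ℝ) ^ e)).congr fun k => ?_
    rw [Function.comp_apply, Nat.cast_mul, mul_pow, ← div_div, div_mul_cancel₀ _ (by positivity)]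
  have hfloor_top : Tendsto (fun p : ℕ => ⌊q * p⌋₊ + 1) atTop atTop :=
    (tendsto_add_atTop_nat 1).comp (tendsto_nat_floor_mul_atTop q (by positivity))
  have hlim := (((tendsto_sum_range_div_pow hslice_lim).comp hfloor_top).mul
    ((tendsto_floor_mul_add_one_div (q := q) (by positivity)).pow (e + 1))).div_const
      ((m : ℝ) ^ (e + 1))
  convert hlim.congr fun p => ?_ using 2
  · rw [Nat.factorial_succ]
    push_cast
    field_simp
    ring
  · rw [ncard_deficitTuples e m hδ.le, Nat.cast_sum, Function.comp_apply, div_pow,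
      div_mul_div_cancel₀ (by positivity), div_div, mul_pow]

end DeficitTuples

theorem liminf_card_Z_ge_general
    (d : ℕ) (hd : 1 ≤ d) (δ : ℝ) (hδ : 0 < δ) (m : ℕ) (hm : 0 < m) :
    δ ^ (d + 1) / ((d.factorial : ℝ) * (1 + δ) ^ d) ≤
      liminf (fun p : ℕ =>
        ({a : Fin (d + 2) → ℕ |
            a 0 * m + ∑ i : Fin (d + 1), a i.succ = p * m ∧
            (p : ℝ) / (δ + 1) ≤ (a 0 : ℝ) ∧ a 0 ≤ p ∧
            ((a 2 : ℕ) : ℝ) < δ * m}.ncard : ℝ) / ((p : ℝ) * m) ^ d) atTop := by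
  obtain ⟨e, rfl⟩ := Nat.exists_eq_add_of_le' hd
  have hceil : δ ≤ ⌈δ * m⌉₊ / m := (le_div_iff₀ (by positivity)).2 (Nat.le_ceil _)
  calc δ ^ (e + 1 + 1) / ((e + 1).factorial * (1 + δ) ^ (e + 1))
      = δ * (δ / (1 + δ)) ^ (e + 1) / (e + 1).factorial := by
        rw [pow_succ' δ (e + 1), div_pow]
        field_simp
    _ ≤ ⌈δ * m⌉₊ / m * (δ / (1 + δ)) ^ (e + 1) / (e + 1).factorial := by gcongr
    _ = _ := (tendsto_ncard_deficitTuples_div_pow e hm hδ).liminf_eq.symm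

/-- Counting estimate giving the volume deficit `δ^{d+1}/(d!(1+δ)^d)`.
Let `d ≥ 1`, `δ > 0` and `m ≥ 1` with `δm ≥ 1`.  For each `p ≥ 1` let `Z(p)` be the set
of tuples `(a₀, …, a_{d+1}) ∈ ℕ^{d+2}` with `a₀·m + Σ_{i=1}^{d+1} aᵢ = p·m`,
`p/(δ+1) ≤ a₀ ≤ p` and `a₂ < δm`.  Then
`liminf_{p → ∞} #Z(p)/(pm)^d ≥ δ^{d+1}/(d!·(1+δ)^d)`. -/
theorem liminf_card_Z_ge
    (d : ℕ) (hd : 1 ≤ d) (δ : ℝ) (hδ : 0 < δ)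
    (m : ℕ) (hm : 0 < m) (hδm : 1 ≤ δ * m) :
    δ ^ (d + 1) / ((d.factorial : ℝ) * (1 + δ) ^ d) ≤
      liminf (fun p : ℕ =>
        ({a : Fin (d + 2) → ℕ |
            a 0 * m + ∑ i : Fin (d + 1), a i.succ = p * m ∧
            (p : ℝ) / (δ + 1) ≤ (a 0 : ℝ) ∧ a 0 ≤ p ∧
            ((a 2 : ℕ) : ℝ) < δ * m}.ncard : ℝ) / ((p : ℝ) * m) ^ d) atTop :=
  liminf_card_Z_ge_general d hd δ hδ m hm
end
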